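/- Let χ : ℝ → ℝ be smooth with χ supported in {y : |y| > β/20}, χ(y) = −1 for y ≤ −β/10, and χ(y) = 1 for y ≥ β/10. Then for every ε > 0 there exist constants C > 0 and λ₀ > 0 (depending on ε, χ, α, β) such that for every real Dirichlet quasimode datum (u, λ, f) on the stadium S with λ ≥ λ₀, λ² ∫_{∂S ∩ W} w² χ(y) (∂_y u)(∂_N u) dl ≤ C λ⁴ ‖u‖²_{L²(W)} + ε ∫_S (∂_x u)² dA + C λ² ‖f‖²_{L²(S)}, where ‖u‖_{L²(W)} is the L² norm of u over the wings W. -/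

import Mathlib

open MeasureTheory Real Set Filter

noncomputable section

/-- Partial derivative in the first (x) variable. -/
def pdx (u : ℝ × ℝ → ℝ) (p : ℝ × ℝ) : ℝ := deriv (fun t => u (t, p.2)) p.1

/-- Partial derivative in the second (y) variable. -/
def pdy (u : ℝ × ℝ → ℝ) (p : ℝ × ℝ) : ℝ := deriv (fun t => u (p.1, t)) p.2

/-- The positive Laplacian `Δu = -u_xx - u_yy`. -/
def lap (u : ℝ × ℝ → ℝ) (p : ℝ × ℝ) : ℝ := -(pdx (pdx u) p) - (pdy (pdy u) p)

/-- The central rectangle `R = [-α,α] × [-β,β]`. -/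
def Rect (α β : ℝ) : Set (ℝ × ℝ) := Icc (-α) α ×ˢ Icc (-β) β

/-- The wings `W = W₊ ∪ W₋`, two half-discs of radius β centered at `(±α, 0)`. -/
def Wings (α β : ℝ) : Set (ℝ × ℝ) :=
  {p | (p.1 - α) ^ 2 + p.2 ^ 2 ≤ β ^ 2 ∧ α ≤ p.1} ∪
  {p | (p.1 + α) ^ 2 + p.2 ^ 2 ≤ β ^ 2 ∧ p.1 ≤ -α}

/-- The Bunimovich stadium `S = R ∪ W`. -/
def Stadium (α β : ℝ) : Set (ℝ × ℝ) := Rect α β ∪ Wings α β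

/-- The boundary `∂S`: two horizontal segments and two semicircles. -/
def StadiumBoundary (α β : ℝ) : Set (ℝ × ℝ) :=
  {p | |p.1| ≤ α ∧ (p.2 = β ∨ p.2 = -β)} ∪
  {p | (|p.1| - α) ^ 2 + p.2 ^ 2 = β ^ 2 ∧ α ≤ |p.1|}

/-- Boundary integral `∫_{∂S} g dl` of an integrand `g` depending on the boundary point
and the outward unit normal at that point. -/
def bdryInt (α β : ℝ) (g : ℝ × ℝ → ℝ × ℝ → ℝ) : ℝ :=
  (∫ x in (-α)..α, (g (x, β) (0, 1) + g (x, -β) (0, -1))) +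
  β * ∫ θ in (-(π / 2))..(π / 2),
    (g (α + β * cos θ, β * sin θ) (cos θ, sin θ) +
     g (-(α + β * cos θ), β * sin θ) (-cos θ, sin θ))

/-- Boundary integral `∫_{∂S ∩ W} g dl` over the two semicircles only. -/
def bdryIntW (α β : ℝ) (g : ℝ × ℝ → ℝ × ℝ → ℝ) : ℝ :=
  β * ∫ θ in (-(π / 2))..(π / 2),
    (g (α + β * cos θ, β * sin θ) (cos θ, sin θ) +
     g (-(α + β * cos θ), β * sin θ) (-cos θ, sin θ))

/-- The normal derivative `∂_N u = n₁ ∂_x u + n₂ ∂_y u` at a boundary point `p`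
with outward unit normal `n`. -/
def nderiv (u : ℝ × ℝ → ℝ) (p n : ℝ × ℝ) : ℝ := n.1 * pdx u p + n.2 * pdy u p

/-- A real Dirichlet quasimode datum `(u, λ, f)` on the stadium: `λ > 0`, `u` smooth on a
neighborhood of `S`, `u = 0` on `∂S`, and `(Δ - λ²) u = f` on `S`. -/
structure QMDatum (α β : ℝ) where
  u : ℝ × ℝ → ℝ
  lam : ℝ
  f : ℝ × ℝ → ℝ
  lam_pos : 0 < lam
  smooth : ∃ V : Set (ℝ × ℝ), IsOpen V ∧ Stadium α β ⊆ V ∧ ContDiffOn ℝ (⊤ : ℕ∞) u V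
  dirichlet : ∀ p ∈ StadiumBoundary α β, u p = 0
  eqn : ∀ p ∈ Stadium α β, lap u p - lam ^ 2 * u p = f p

/-!
In each wing `w = |x| - α` is a smooth coordinate. The Rellich identity for the multiplier
`w² χ(y) ∂_y u` turns the boundary integral into an interior one: on the semicircle `∇u` is normal
to the boundary, and on the side facing the rectangle the weight vanishes. As `w² χ(y)` and its
gradient are `O(w)`, the first-order terms of the interior integral are `O(w |∇u|²)`. These are
controlled by integrating `w u Δu` by parts, which again has no boundary term and whose only
first-order remainder, `u ∂_x u`, is split by the AM-GM inequality into `λ² u²` and a small multiple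
of `λ⁻² (∂_x u)²`.
-/

section PartialDerivatives

variable {u : ℝ × ℝ → ℝ} {p : ℝ × ℝ}

lemma pdx_eq_fderiv (hu : DifferentiableAt ℝ u p) : pdx u p = fderiv ℝ u p (1, 0) :=
  (hu.hasFDerivAt.comp_hasDerivAt p.1
    ((hasDerivAt_id p.1).prodMk (hasDerivAt_const p.1 p.2))).deriv

lemma pdy_eq_fderiv (hu : DifferentiableAt ℝ u p) : pdy u p = fderiv ℝ u p (0, 1) :=
  (hu.hasFDerivAt.comp_hasDerivAt p.2
    ((hasDerivAt_const p.2 p.1).prodMk (hasDerivAt_id p.2))).deriv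

lemma hasDerivAt_comp_curve {a b : ℝ → ℝ} {a' b' t : ℝ} (hu : DifferentiableAt ℝ u (a t, b t))
    (ha : HasDerivAt a a' t) (hb : HasDerivAt b b' t) :
    HasDerivAt (fun s ↦ u (a s, b s)) (a' * pdx u (a t, b t) + b' * pdy u (a t, b t)) t := by
  refine (hu.hasFDerivAt.comp_hasDerivAt t (ha.prodMk hb)).congr_deriv ?_
  have hdecomp : (a', b') = a' • ((1 : ℝ), (0 : ℝ)) + b' • ((0 : ℝ), (1 : ℝ)) := by simp
  rw [hdecomp, map_add, map_smul, map_smul, smul_eq_mul, smul_eq_mul, pdx_eq_fderiv hu,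
    pdy_eq_fderiv hu]

lemma hasDerivAt_fst (hu : DifferentiableAt ℝ u p) :
    HasDerivAt (fun t ↦ u (t, p.2)) (pdx u p) p.1 := by
  simpa using hasDerivAt_comp_curve hu (hasDerivAt_id p.1) (hasDerivAt_const p.1 p.2)

lemma hasDerivAt_snd (hu : DifferentiableAt ℝ u p) :
    HasDerivAt (fun t ↦ u (p.1, t)) (pdy u p) p.2 := by
  simpa using hasDerivAt_comp_curve hu (hasDerivAt_const p.2 p.1) (hasDerivAt_id p.2)

lemma pdx_eventuallyEq_fderiv (hu : ContDiffAt ℝ 1 u p) :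
    pdx u =ᶠ[nhds p] fun q ↦ fderiv ℝ u q (1, 0) := by
  filter_upwards [hu.eventually (by simp)] with q hq
  exact pdx_eq_fderiv (hq.differentiableAt one_ne_zero)

lemma pdy_eventuallyEq_fderiv (hu : ContDiffAt ℝ 1 u p) :
    pdy u =ᶠ[nhds p] fun q ↦ fderiv ℝ u q (0, 1) := by
  filter_upwards [hu.eventually (by simp)] with q hq
  exact pdy_eq_fderiv (hq.differentiableAt one_ne_zero)

lemma contDiffAt_pdx {m n : WithTop ℕ∞} (hu : ContDiffAt ℝ n u p) (hmn : m + 1 ≤ n) :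
    ContDiffAt ℝ m (pdx u) p :=
  ((hu.fderiv_right hmn).clm_apply contDiffAt_const).congr_of_eventuallyEq
    (pdx_eventuallyEq_fderiv (hu.of_le (le_add_self.trans hmn)))

lemma contDiffAt_pdy {m n : WithTop ℕ∞} (hu : ContDiffAt ℝ n u p) (hmn : m + 1 ≤ n) :
    ContDiffAt ℝ m (pdy u) p :=
  ((hu.fderiv_right hmn).clm_apply contDiffAt_const).congr_of_eventuallyEq
    (pdy_eventuallyEq_fderiv (hu.of_le (le_add_self.trans hmn)))

lemma continuousOn_pdx {n : WithTop ℕ∞} {s : Set (ℝ × ℝ)} (hu : ∀ p ∈ s, ContDiffAt ℝ n u p)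
    (hn : 1 ≤ n) : ContinuousOn (pdx u) s := fun p hp ↦
  (contDiffAt_pdx (hu p hp) ((zero_add 1).trans_le hn)).continuousAt.continuousWithinAt

lemma continuousOn_pdy {n : WithTop ℕ∞} {s : Set (ℝ × ℝ)} (hu : ∀ p ∈ s, ContDiffAt ℝ n u p)
    (hn : 1 ≤ n) : ContinuousOn (pdy u) s := fun p hp ↦
  (contDiffAt_pdy (hu p hp) ((zero_add 1).trans_le hn)).continuousAt.continuousWithinAt

lemma continuousOn_lap {s : Set (ℝ × ℝ)} (hu : ∀ p ∈ s, ContDiffAt ℝ 2 u p) :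
    ContinuousOn (lap u) s :=
  (continuousOn_pdx (fun p hp ↦ contDiffAt_pdx (hu p hp) one_add_one_eq_two.le) le_rfl).neg.sub
    (continuousOn_pdy (fun p hp ↦ contDiffAt_pdy (hu p hp) one_add_one_eq_two.le) le_rfl)

lemma pdx_pdy_comm (hu : ContDiffAt ℝ 2 u p) : pdx (pdy u) p = pdy (pdx u) p := by
  have hu₁ : ContDiffAt ℝ 1 u p := hu.of_le one_le_two
  have hd : DifferentiableAt ℝ (fderiv ℝ u) p :=
    (hu.fderiv_right one_add_one_eq_two.le).differentiableAt one_ne_zero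
  rw [pdx_eq_fderiv ((contDiffAt_pdy hu one_add_one_eq_two.le).differentiableAt one_ne_zero),
    pdy_eq_fderiv ((contDiffAt_pdx hu one_add_one_eq_two.le).differentiableAt one_ne_zero),
    (pdy_eventuallyEq_fderiv hu₁).fderiv_eq, (pdx_eventuallyEq_fderiv hu₁).fderiv_eq,
    fderiv_clm_apply hd (differentiableAt_const _), fderiv_clm_apply hd (differentiableAt_const _)]
  simpa using hu.isSymmSndFDerivAt (by simp) (1, 0) (0, 1)

end PartialDerivatives

section HalfDisc

/-- The closed right half-disc of radius `|β|` about the origin, the model of one wing. -/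
def halfDisc (β : ℝ) : Set (ℝ × ℝ) := {p | p.1 ^ 2 + p.2 ^ 2 ≤ β ^ 2 ∧ 0 ≤ p.1}

/-- The integral `∫ g dl` over the arc of `halfDisc β`, in the format of `bdryIntW`: the integrand
receives the boundary point and the outward unit normal there. -/
def arcInt (β : ℝ) (g : ℝ × ℝ → ℝ × ℝ → ℝ) : ℝ :=
  β * ∫ θ in (-(π / 2))..(π / 2), g (β * cos θ, β * sin θ) (cos θ, sin θ)

variable {β : ℝ}

lemma abs_fst_le_of_mem_halfDisc {p : ℝ × ℝ} (hp : p ∈ halfDisc β) : |p.1| ≤ |β| :=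
  sq_le_sq.1 ((le_add_of_nonneg_right (sq_nonneg p.2)).trans hp.1)

lemma abs_snd_le_of_mem_halfDisc {p : ℝ × ℝ} (hp : p ∈ halfDisc β) : |p.2| ≤ |β| :=
  sq_le_sq.1 ((le_add_of_nonneg_left (sq_nonneg p.1)).trans hp.1)

lemma isCompact_halfDisc : IsCompact (halfDisc β) := by
  have hclosed : IsClosed (halfDisc β) :=
    (isClosed_le (f := fun p : ℝ × ℝ ↦ p.1 ^ 2 + p.2 ^ 2) (by fun_prop) continuous_const).inter
      (isClosed_le continuous_const continuous_fst)
  refine (isCompact_Icc.prod isCompact_Icc).of_isClosed_subset hclosed fun p hp ↦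
    (⟨abs_le.1 (abs_fst_le_of_mem_halfDisc hp), abs_le.1 (abs_snd_le_of_mem_halfDisc hp)⟩ :
      p ∈ Icc (-|β|) |β| ×ˢ Icc (-|β|) |β|)

lemma measurableSet_halfDisc : MeasurableSet (halfDisc β) := isCompact_halfDisc.measurableSet

lemma polar_sq_add_sq (r θ : ℝ) : (r * cos θ) ^ 2 + (r * sin θ) ^ 2 = r ^ 2 := by
  linear_combination r ^ 2 * sin_sq_add_cos_sq θ

lemma polar_mem_halfDisc {r θ : ℝ} (hr : |r| ≤ |β|) (h : 0 ≤ r * cos θ) :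
    (r * cos θ, r * sin θ) ∈ halfDisc β :=
  ⟨by simpa only [polar_sq_add_sq] using sq_le_sq.2 hr, h⟩

lemma arc_mem_halfDisc (hβ : 0 ≤ β) {θ : ℝ} (hθ : θ ∈ Icc (-(π / 2)) (π / 2)) :
    (β * cos θ, β * sin θ) ∈ halfDisc β :=
  polar_mem_halfDisc le_rfl (mul_nonneg hβ (cos_nonneg_of_mem_Icc hθ))

lemma polarCoord_target_inter_preimage_halfDisc (hβ : 0 ≤ β) :
    polarCoord.target ∩ polarCoord.symm ⁻¹' halfDisc β =
      Ioc 0 β ×ˢ Icc (-(π / 2)) (π / 2) := by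
  ext ⟨r, θ⟩
  simp only [polarCoord_target, mem_inter_iff, mem_prod, mem_Ioi, mem_Ioo, mem_preimage,
    polarCoord_symm_apply, halfDisc, mem_ofPred_eq, polar_sq_add_sq, mem_Ioc, mem_Icc]
  constructor
  · rintro ⟨⟨hr, hθ⟩, hle, hcos⟩
    have hθ' : |θ| ≤ π / 2 := by
      by_contra! h
      have hneg := cos_neg_of_pi_div_two_lt_of_lt h ((abs_lt.2 hθ).trans (by linarith [pi_pos]))
      exact hcos.not_gt (mul_neg_of_pos_of_neg hr (cos_abs θ ▸ hneg))
    exact ⟨⟨hr, (sq_le_sq₀ hr.le hβ).1 hle⟩, abs_le.1 hθ'⟩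
  · rintro ⟨⟨hr, hle⟩, hθ⟩
    exact ⟨⟨hr, by linarith [pi_pos], by linarith [pi_pos]⟩, (sq_le_sq₀ hr.le hβ).2 hle,
      mul_nonneg hr.le (cos_nonneg_of_mem_Icc hθ)⟩

lemma setIntegral_halfDisc (hβ : 0 ≤ β) (h : ℝ × ℝ → ℝ) :
    ∫ p in halfDisc β, h p =
      ∫ q in Icc (0, -(π / 2)) (β, π / 2), q.1 * h (q.1 * cos q.2, q.1 * sin q.2) := by
  have hmeas : MeasurableSet (polarCoord.symm ⁻¹' halfDisc β) :=
    continuous_polarCoord_symm.measurable measurableSet_halfDisc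
  calc ∫ p in halfDisc β, h p
      = ∫ q in polarCoord.target, q.1 • (halfDisc β).indicator h (polarCoord.symm q) := by
        rw [integral_comp_polarCoord_symm, integral_indicator measurableSet_halfDisc]
    _ = ∫ q in polarCoord.target, (polarCoord.symm ⁻¹' halfDisc β).indicator
          (fun q ↦ q.1 * h (q.1 * cos q.2, q.1 * sin q.2)) q := by
        congr 1 with q
        by_cases hq : polarCoord.symm q ∈ halfDisc β
        · rw [indicator_of_mem hq, indicator_of_mem (mem_preimage.2 hq), smul_eq_mul,
            polarCoord_symm_apply]
        · rw [indicator_of_notMem hq, indicator_of_notMem (mt mem_preimage.1 hq), smul_zero]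
    _ = ∫ q in Ioc 0 β ×ˢ Icc (-(π / 2)) (π / 2), q.1 * h (q.1 * cos q.2, q.1 * sin q.2) := by
        rw [setIntegral_indicator hmeas, polarCoord_target_inter_preimage_halfDisc hβ]
    _ = ∫ q in Icc (0, -(π / 2)) (β, π / 2), q.1 * h (q.1 * cos q.2, q.1 * sin q.2) := by
        rw [← Icc_prod_Icc]
        exact setIntegral_congr_set (Measure.set_prod_ae_eq Ioc_ae_eq_Icc ae_eq_rfl)

end HalfDisc

section Divergence

variable {β : ℝ} {P Q : ℝ × ℝ → ℝ}

lemma setIntegral_Icc_divergence {a b : ℝ × ℝ} (hab : a ≤ b)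
    (hP : ∀ p ∈ Icc a b, ContDiffAt ℝ 1 P p) (hQ : ∀ p ∈ Icc a b, ContDiffAt ℝ 1 Q p) :
    ∫ p in Icc a b, (pdx P p + pdy Q p) =
      (((∫ x in a.1..b.1, Q (x, b.2)) - ∫ x in a.1..b.1, Q (x, a.2)) +
        ∫ y in a.2..b.2, P (b.1, y)) - ∫ y in a.2..b.2, P (a.1, y) := by
  have hcongr : EqOn (fun p ↦ pdx P p + pdy Q p)
      (fun p ↦ fderiv ℝ P p (1, 0) + fderiv ℝ Q p (0, 1)) (Icc a b) := fun p hp ↦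
    congrArg₂ (· + ·) (pdx_eq_fderiv ((hP p hp).differentiableAt one_ne_zero))
      (pdy_eq_fderiv ((hQ p hp).differentiableAt one_ne_zero))
  have hsub : Ioo a.1 b.1 ×ˢ Ioo a.2 b.2 ⊆ Icc a b :=
    Icc_prod_eq a b ▸ prod_mono Ioo_subset_Icc_self Ioo_subset_Icc_self
  rw [setIntegral_congr_fun measurableSet_Icc hcongr]
  refine integral_divergence_prod_Icc_of_hasFDerivAt_of_le P Q _ _ a b hab
    (fun p hp ↦ (hP p hp).continuousAt.continuousWithinAt)
    (fun p hp ↦ (hQ p hp).continuousAt.continuousWithinAt)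
    (fun p hp ↦ ((hP p (hsub hp)).differentiableAt one_ne_zero).hasFDerivAt)
    (fun p hp ↦ ((hQ p (hsub hp)).differentiableAt one_ne_zero).hasFDerivAt)
    (ContinuousOn.integrableOn_compact isCompact_Icc fun p hp ↦ ?_)
  have hP' := ((hP p hp).fderiv_right (zero_add 1).le).continuousAt
  have hQ' := ((hQ p hp).fderiv_right (zero_add 1).le).continuousAt
  exact ((hP'.clm_apply continuousAt_const).add
    (hQ'.clm_apply continuousAt_const)).continuousWithinAt

/-- `r` times the radial component of the vector field `(P, Q)`, as a function of the polar
coordinates `(r, θ)`. -/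
def radialFlux (P Q : ℝ × ℝ → ℝ) (q : ℝ × ℝ) : ℝ :=
  q.1 * (cos q.2 * P (q.1 * cos q.2, q.1 * sin q.2) + sin q.2 * Q (q.1 * cos q.2, q.1 * sin q.2))

/-- The angular component of the vector field `(P, Q)`, as a function of the polar coordinates
`(r, θ)`. -/
def angularFlux (P Q : ℝ × ℝ → ℝ) (q : ℝ × ℝ) : ℝ :=
  -sin q.2 * P (q.1 * cos q.2, q.1 * sin q.2) + cos q.2 * Q (q.1 * cos q.2, q.1 * sin q.2)

lemma contDiffAt_comp_polar {n : WithTop ℕ∞} {q : ℝ × ℝ}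
    (hP : ContDiffAt ℝ n P (q.1 * cos q.2, q.1 * sin q.2)) :
    ContDiffAt ℝ n (fun q : ℝ × ℝ ↦ P (q.1 * cos q.2, q.1 * sin q.2)) q :=
  hP.comp q ((contDiff_fst.mul (contDiff_cos.comp contDiff_snd)).prodMk
    (contDiff_fst.mul (contDiff_sin.comp contDiff_snd))).contDiffAt

lemma contDiffAt_radialFlux {n : WithTop ℕ∞} {q : ℝ × ℝ}
    (hP : ContDiffAt ℝ n P (q.1 * cos q.2, q.1 * sin q.2))
    (hQ : ContDiffAt ℝ n Q (q.1 * cos q.2, q.1 * sin q.2)) :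
    ContDiffAt ℝ n (radialFlux P Q) q :=
  contDiffAt_fst.mul
    (((contDiff_cos.comp contDiff_snd).contDiffAt.mul (contDiffAt_comp_polar hP)).add
      ((contDiff_sin.comp contDiff_snd).contDiffAt.mul (contDiffAt_comp_polar hQ)))

lemma contDiffAt_angularFlux {n : WithTop ℕ∞} {q : ℝ × ℝ}
    (hP : ContDiffAt ℝ n P (q.1 * cos q.2, q.1 * sin q.2))
    (hQ : ContDiffAt ℝ n Q (q.1 * cos q.2, q.1 * sin q.2)) :
    ContDiffAt ℝ n (angularFlux P Q) q :=
  ((contDiff_sin.comp contDiff_snd).neg.contDiffAt.mul (contDiffAt_comp_polar hP)).add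
    ((contDiff_cos.comp contDiff_snd).contDiffAt.mul (contDiffAt_comp_polar hQ))

lemma pdx_radialFlux_add_pdy_angularFlux {q : ℝ × ℝ}
    (hP : DifferentiableAt ℝ P (q.1 * cos q.2, q.1 * sin q.2))
    (hQ : DifferentiableAt ℝ Q (q.1 * cos q.2, q.1 * sin q.2)) :
    pdx (radialFlux P Q) q + pdy (angularFlux P Q) q =
      q.1 * (pdx P (q.1 * cos q.2, q.1 * sin q.2) + pdy Q (q.1 * cos q.2, q.1 * sin q.2)) := by
  obtain ⟨r, θ⟩ := q
  have hxr : HasDerivAt (fun t ↦ t * cos θ) (cos θ) r := hasDerivAt_mul_const _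
  have hyr : HasDerivAt (fun t ↦ t * sin θ) (sin θ) r := hasDerivAt_mul_const _
  have hxθ : HasDerivAt (fun t ↦ r * cos t) (r * -sin θ) θ := (hasDerivAt_cos θ).const_mul r
  have hyθ : HasDerivAt (fun t ↦ r * sin t) (r * cos θ) θ := (hasDerivAt_sin θ).const_mul r
  have hradial : pdx (radialFlux P Q) (r, θ) = _ := ((hasDerivAt_id' r).fun_mul
    (((hasDerivAt_comp_curve hP hxr hyr).const_mul (cos θ)).fun_add
      ((hasDerivAt_comp_curve hQ hxr hyr).const_mul (sin θ)))).deriv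
  have hangular : pdy (angularFlux P Q) (r, θ) = _ :=
    (((hasDerivAt_sin θ).fun_neg.fun_mul (hasDerivAt_comp_curve hP hxθ hyθ)).fun_add
      ((hasDerivAt_cos θ).fun_mul (hasDerivAt_comp_curve hQ hxθ hyθ))).deriv
  rw [hradial, hangular]
  linear_combination r * (pdx P (r * cos θ, r * sin θ) + pdy Q (r * cos θ, r * sin θ)) *
    sin_sq_add_cos_sq θ

/-- In polar coordinates the half-disc becomes a rectangle, and `r • div (P, Q)` is the divergence
of `(radialFlux P Q, angularFlux P Q)`. -/
theorem setIntegral_halfDisc_divergence (hβ : 0 ≤ β)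
    (hP : ∀ p ∈ halfDisc β, ContDiffAt ℝ 1 P p) (hQ : ∀ p ∈ halfDisc β, ContDiffAt ℝ 1 Q p) :
    ∫ p in halfDisc β, (pdx P p + pdy Q p) =
      arcInt β (fun p n ↦ n.1 * P p + n.2 * Q p) - ∫ y in (-β)..β, P (0, y) := by
  have hmem : ∀ q ∈ Icc ((0 : ℝ), -(π / 2)) (β, π / 2),
      (q.1 * cos q.2, q.1 * sin q.2) ∈ halfDisc β := fun q hq ↦
    polar_mem_halfDisc (abs_le_abs_of_nonneg hq.1.1 hq.2.1)
      (mul_nonneg hq.1.1 (cos_nonneg_of_mem_Icc ⟨hq.1.2, hq.2.2⟩))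
  have hrect := setIntegral_Icc_divergence (a := (0, -(π / 2))) (b := (β, π / 2))
    ⟨hβ, neg_le_self (by positivity)⟩
    (fun q hq ↦ contDiffAt_radialFlux (hP _ (hmem q hq)) (hQ _ (hmem q hq)))
    (fun q hq ↦ contDiffAt_angularFlux (hP _ (hmem q hq)) (hQ _ (hmem q hq)))
  have hpolar : EqOn (fun q ↦ pdx (radialFlux P Q) q + pdy (angularFlux P Q) q)
      (fun q ↦ q.1 * (pdx P (q.1 * cos q.2, q.1 * sin q.2) + pdy Q (q.1 * cos q.2, q.1 * sin q.2)))
      (Icc (0, -(π / 2)) (β, π / 2)) := fun q hq ↦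
    pdx_radialFlux_add_pdy_angularFlux ((hP _ (hmem q hq)).differentiableAt one_ne_zero)
      ((hQ _ (hmem q hq)).differentiableAt one_ne_zero)
  have hcont : ContinuousOn (fun y ↦ P (0, y)) (Icc (-β) β) := fun y hy ↦
    have hy' : ((0 : ℝ), y) ∈ halfDisc β := ⟨by nlinarith [hy.1, hy.2], le_rfl⟩
    ((hP _ hy').continuousAt.comp (by fun_prop)).continuousWithinAt
  have hdiameter :
      ∫ y in (-β)..β, P (0, y) = (∫ r in 0..β, P (0, -r)) + ∫ r in 0..β, P (0, r) := by
    rw [intervalIntegral.integral_comp_neg fun y ↦ P (0, y), neg_zero,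
      intervalIntegral.integral_add_adjacent_intervals] <;>
    refine (hcont.mono ?_).intervalIntegrable <;>
    refine uIcc_subset_Icc ⟨?_, ?_⟩ ⟨?_, ?_⟩ <;> linarith
  rw [setIntegral_halfDisc hβ, ← setIntegral_congr_fun measurableSet_Icc hpolar, hrect, hdiameter]
  simp only [radialFlux, angularFlux, arcInt, sin_pi_div_two, cos_pi_div_two, sin_neg, cos_neg,
    mul_zero, mul_one, zero_mul, neg_neg, one_mul, neg_mul, mul_neg, add_zero, sub_zero,
    intervalIntegral.integral_neg, intervalIntegral.integral_const_mul,
    intervalIntegral.integral_zero]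
  ring

lemma setIntegral_halfDisc_divergence_eq_arcInt (hβ : 0 ≤ β)
    (hP : ∀ p ∈ halfDisc β, ContDiffAt ℝ 1 P p) (hQ : ∀ p ∈ halfDisc β, ContDiffAt ℝ 1 Q p)
    (hP₀ : ∀ p ∈ halfDisc β, p.1 = 0 → P p = 0) :
    ∫ p in halfDisc β, (pdx P p + pdy Q p) = arcInt β fun p n ↦ n.1 * P p + n.2 * Q p := by
  have hdiameter : ∫ y in (-β)..β, P (0, y) = 0 := by
    refine intervalIntegral.integral_zero_ae (ae_of_all _ fun y hy ↦ hP₀ _ ⟨?_, le_rfl⟩ rfl)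
    rw [uIoc_of_le (neg_le_self hβ)] at hy
    nlinarith [hy.1, hy.2]
  rw [setIntegral_halfDisc_divergence hβ hP hQ, hdiameter, sub_zero]

end Divergence

section Identities

variable {β : ℝ} {a v w : ℝ × ℝ → ℝ} {p : ℝ × ℝ}

lemma pdx_add_pdy_rellich (ha : DifferentiableAt ℝ a p) (hv : ContDiffAt ℝ 2 v p) (k : ℝ) :
    pdx (fun q ↦ 2 * a q * pdx v q * pdy v q) p +
        pdy (fun q ↦ a q * (pdy v q ^ 2 - pdx v q ^ 2 + k * v q ^ 2)) p =
      2 * pdx a p * pdx v p * pdy v p + pdy a p * (pdy v p ^ 2 - pdx v p ^ 2 + k * v p ^ 2) -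
        2 * a p * pdy v p * (lap v p - k * v p) := by
  have hv' : DifferentiableAt ℝ v p := hv.differentiableAt two_ne_zero
  have hvx : DifferentiableAt ℝ (pdx v) p :=
    (contDiffAt_pdx hv one_add_one_eq_two.le).differentiableAt one_ne_zero
  have hvy : DifferentiableAt ℝ (pdy v) p :=
    (contDiffAt_pdy hv one_add_one_eq_two.le).differentiableAt one_ne_zero
  have hx : pdx (fun q ↦ 2 * a q * pdx v q * pdy v q) p = _ :=
    ((((hasDerivAt_fst ha).const_mul 2).fun_mul (hasDerivAt_fst hvx)).fun_mul
      (hasDerivAt_fst hvy)).deriv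
  have hy : pdy (fun q ↦ a q * (pdy v q ^ 2 - pdx v q ^ 2 + k * v q ^ 2)) p = _ :=
    ((hasDerivAt_snd ha).fun_mul
      ((((hasDerivAt_snd hvy).fun_pow 2).fun_sub ((hasDerivAt_snd hvx).fun_pow 2)).fun_add
        (((hasDerivAt_snd hv').fun_pow 2).const_mul k))).deriv
  rw [hx, hy, pdx_pdy_comm hv, lap]
  norm_num
  ring

lemma pdx_add_pdy_energy (hw : DifferentiableAt ℝ w p) (hv : ContDiffAt ℝ 2 v p) :
    pdx (fun q ↦ w q * v q * pdx v q) p + pdy (fun q ↦ w q * v q * pdy v q) p =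
      w p * (pdx v p ^ 2 + pdy v p ^ 2) -
        v p * (w p * lap v p - pdx w p * pdx v p - pdy w p * pdy v p) := by
  have hv' : DifferentiableAt ℝ v p := hv.differentiableAt two_ne_zero
  have hvx : DifferentiableAt ℝ (pdx v) p :=
    (contDiffAt_pdx hv one_add_one_eq_two.le).differentiableAt one_ne_zero
  have hvy : DifferentiableAt ℝ (pdy v) p :=
    (contDiffAt_pdy hv one_add_one_eq_two.le).differentiableAt one_ne_zero
  have hx : pdx (fun q ↦ w q * v q * pdx v q) p = _ :=
    (((hasDerivAt_fst hw).fun_mul (hasDerivAt_fst hv')).fun_mul (hasDerivAt_fst hvx)).deriv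
  have hy : pdy (fun q ↦ w q * v q * pdy v q) p = _ :=
    (((hasDerivAt_snd hw).fun_mul (hasDerivAt_snd hv')).fun_mul (hasDerivAt_snd hvy)).deriv
  rw [hx, hy, lap]
  ring

lemma arcInt_congr {g g' : ℝ × ℝ → ℝ × ℝ → ℝ}
    (h : ∀ θ ∈ Ioo (-(π / 2)) (π / 2),
      g (β * cos θ, β * sin θ) (cos θ, sin θ) = g' (β * cos θ, β * sin θ) (cos θ, sin θ)) :
    arcInt β g = arcInt β g' :=
  congrArg (β * ·) (intervalIntegral.integral_congr_Ioo_of_le (neg_le_self (by positivity)) h)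

lemma cos_mul_pdy_eq_sin_mul_pdx (hβ : 0 < β)
    (hv₀ : ∀ p ∈ halfDisc β, p.1 ^ 2 + p.2 ^ 2 = β ^ 2 → v p = 0) {θ : ℝ}
    (hθ : θ ∈ Ioo (-(π / 2)) (π / 2)) (hv : DifferentiableAt ℝ v (β * cos θ, β * sin θ)) :
    cos θ * pdy v (β * cos θ, β * sin θ) = sin θ * pdx v (β * cos θ, β * sin θ) := by
  have hchain := hasDerivAt_comp_curve hv ((hasDerivAt_cos θ).const_mul β)
    ((hasDerivAt_sin θ).const_mul β)
  have hzero : (fun t ↦ v (β * cos t, β * sin t)) =ᶠ[nhds θ] fun _ ↦ 0 := by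
    filter_upwards [Ioo_mem_nhds hθ.1 hθ.2] with t ht
    exact hv₀ _ (arc_mem_halfDisc hβ.le (Ioo_subset_Icc_self ht)) (polar_sq_add_sq β t)
  have := hchain.unique ((hasDerivAt_const θ (0 : ℝ)).congr_of_eventuallyEq hzero)
  exact mul_left_cancel₀ hβ.ne' (by linear_combination this)

/-- The Rellich identity for the vertical multiplier `a ∂_y v`: on the arc the gradient of `v` is
normal, so the flux of the Rellich field is `a (∂_y v) (∂_N v)`. -/
theorem arcInt_mul_pdy_mul_nderiv (hβ : 0 < β) (ha : ∀ p ∈ halfDisc β, ContDiffAt ℝ 1 a p)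
    (ha₀ : ∀ p ∈ halfDisc β, p.1 = 0 → a p = 0) (hv : ∀ p ∈ halfDisc β, ContDiffAt ℝ 2 v p)
    (hv₀ : ∀ p ∈ halfDisc β, p.1 ^ 2 + p.2 ^ 2 = β ^ 2 → v p = 0) (k : ℝ) :
    arcInt β (fun p n ↦ a p * pdy v p * nderiv v p n) =
      ∫ p in halfDisc β, (2 * pdx a p * pdx v p * pdy v p +
        pdy a p * (pdy v p ^ 2 - pdx v p ^ 2 + k * v p ^ 2) -
        2 * a p * pdy v p * (lap v p - k * v p)) := by
  have hvx := fun p hp ↦ contDiffAt_pdx (hv p hp) one_add_one_eq_two.le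
  have hvy := fun p hp ↦ contDiffAt_pdy (hv p hp) one_add_one_eq_two.le
  have hdiv := setIntegral_halfDisc_divergence_eq_arcInt hβ.le
    (P := fun q ↦ 2 * a q * pdx v q * pdy v q)
    (Q := fun q ↦ a q * (pdy v q ^ 2 - pdx v q ^ 2 + k * v q ^ 2))
    (fun p hp ↦ ((contDiffAt_const.mul (ha p hp)).mul (hvx p hp)).mul (hvy p hp))
    (fun p hp ↦ (ha p hp).mul ((((hvy p hp).pow 2).sub ((hvx p hp).pow 2)).add
      (contDiffAt_const.mul (((hv p hp).of_le one_le_two).pow 2))))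
    (fun p hp h ↦ by simp [ha₀ p hp h])
  rw [setIntegral_congr_fun measurableSet_halfDisc fun p hp ↦
      pdx_add_pdy_rellich ((ha p hp).differentiableAt one_ne_zero) (hv p hp) k] at hdiv
  rw [hdiv]
  refine arcInt_congr fun θ hθ ↦ ?_
  have hmem := arc_mem_halfDisc hβ.le (Ioo_subset_Icc_self hθ)
  have htan := cos_mul_pdy_eq_sin_mul_pdx hβ hv₀ hθ ((hv _ hmem).differentiableAt two_ne_zero)
  simp only [nderiv, hv₀ _ hmem (polar_sq_add_sq β θ)]
  linear_combination -a (β * cos θ, β * sin θ) * pdx v (β * cos θ, β * sin θ) * htan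

theorem setIntegral_halfDisc_energy (hβ : 0 ≤ β) (hw : ∀ p ∈ halfDisc β, ContDiffAt ℝ 1 w p)
    (hw₀ : ∀ p ∈ halfDisc β, p.1 = 0 → w p = 0) (hv : ∀ p ∈ halfDisc β, ContDiffAt ℝ 2 v p)
    (hv₀ : ∀ p ∈ halfDisc β, p.1 ^ 2 + p.2 ^ 2 = β ^ 2 → v p = 0) :
    ∫ p in halfDisc β, w p * (pdx v p ^ 2 + pdy v p ^ 2) =
      ∫ p in halfDisc β, v p * (w p * lap v p - pdx w p * pdx v p - pdy w p * pdy v p) := by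
  have hv₁ := fun p hp ↦ (hv p hp).of_le one_le_two
  have hvx := fun p hp ↦ contDiffAt_pdx (hv p hp) one_add_one_eq_two.le
  have hvy := fun p hp ↦ contDiffAt_pdy (hv p hp) one_add_one_eq_two.le
  have hdiv := setIntegral_halfDisc_divergence_eq_arcInt hβ
    (P := fun q ↦ w q * v q * pdx v q) (Q := fun q ↦ w q * v q * pdy v q)
    (fun p hp ↦ ((hw p hp).mul (hv₁ p hp)).mul (hvx p hp))
    (fun p hp ↦ ((hw p hp).mul (hv₁ p hp)).mul (hvy p hp))
    (fun p hp h ↦ by simp [hw₀ p hp h])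
  have harc : arcInt β (fun p n ↦ n.1 * (w p * v p * pdx v p) + n.2 * (w p * v p * pdy v p)) =
      arcInt β fun _ _ ↦ 0 := arcInt_congr fun θ hθ ↦ by
    simp [hv₀ _ (arc_mem_halfDisc hβ (Ioo_subset_Icc_self hθ)) (polar_sq_add_sq β θ)]
  rw [harc, setIntegral_congr_fun measurableSet_halfDisc fun p hp ↦
      pdx_add_pdy_energy ((hw p hp).differentiableAt one_ne_zero) (hv p hp),
    integral_sub] at hdiv
  · simpa [arcInt, sub_eq_zero] using hdiv
  all_goals
    refine ContinuousOn.integrableOn_compact isCompact_halfDisc ?_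
    have := continuousOn_pdx hv one_le_two
    have := continuousOn_pdy hv one_le_two
    have := continuousOn_pdx hw le_rfl
    have := continuousOn_pdy hw le_rfl
    have := continuousOn_lap hv
    have : ContinuousOn v (halfDisc β) := fun p hp ↦ (hv p hp).continuousAt.continuousWithinAt
    have : ContinuousOn w (halfDisc β) := fun p hp ↦ (hw p hp).continuousAt.continuousWithinAt
    fun_prop

end Identities

section Estimates

lemma setIntegral_le_of_le_add_add {X : Type*} [TopologicalSpace X] [T2Space X] [MeasurableSpace X]
    [OpensMeasurableSpace X] {μ : Measure X} [IsFiniteMeasureOnCompacts μ] {s : Set X}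
    (hs : IsCompact s) {F f₁ f₂ f₃ : X → ℝ} {c₁ c₂ c₃ : ℝ} (hF : ContinuousOn F s)
    (h₁ : ContinuousOn f₁ s) (h₂ : ContinuousOn f₂ s) (h₃ : ContinuousOn f₃ s)
    (hle : ∀ p ∈ s, F p ≤ c₁ * f₁ p + c₂ * f₂ p + c₃ * f₃ p) :
    ∫ p in s, F p ∂μ ≤
      c₁ * (∫ p in s, f₁ p ∂μ) + c₂ * (∫ p in s, f₂ p ∂μ) + c₃ * ∫ p in s, f₃ p ∂μ := by
  have hint {f : X → ℝ} (hf : ContinuousOn f s) : IntegrableOn f s μ :=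
    hf.integrableOn_compact' hs hs.measurableSet
  calc ∫ p in s, F p ∂μ
      ≤ ∫ p in s, (c₁ * f₁ p + c₂ * f₂ p + c₃ * f₃ p) ∂μ :=
        setIntegral_mono_on (hint hF) (hint (by fun_prop)) hs.measurableSet hle
    _ = c₁ * (∫ p in s, f₁ p ∂μ) + c₂ * (∫ p in s, f₂ p ∂μ) + c₃ * ∫ p in s, f₃ p ∂μ := by
        rw [integral_add (hint (by fun_prop)) (hint (by fun_prop)),
          integral_add (hint (by fun_prop)) (hint (by fun_prop))]
        simp only [integral_const_mul]

lemma rellich_integrand_le {A X Y K w k v vx vy g : ℝ} (hA : |A| ≤ K * w) (hX : |X| ≤ K * w)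
    (hY : |Y| ≤ K * w) (hk : 0 ≤ k) :
    2 * X * vx * vy + Y * (vy ^ 2 - vx ^ 2 + k * v ^ 2) - 2 * A * vy * g ≤
      3 * K * (w * (vx ^ 2 + vy ^ 2)) + K * w * (k * v ^ 2 + g ^ 2) := by
  have hbound {c q r : ℝ} (hc : |c| ≤ K * w) (hq : |q| ≤ r) : c * q ≤ K * w * r :=
    (le_abs_self _).trans <| (abs_mul c q).trans_le <|
      mul_le_mul hc hq (abs_nonneg q) ((abs_nonneg c).trans hc)
  have hcross (s t : ℝ) : |2 * s * t| ≤ s ^ 2 + t ^ 2 :=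
    abs_le.2 ⟨by linarith [sq_nonneg (s + t)], two_mul_le_add_sq s t⟩
  have hdiff : |vy ^ 2 - vx ^ 2 + k * v ^ 2| ≤ vx ^ 2 + vy ^ 2 + k * v ^ 2 := by
    have := mul_nonneg hk (sq_nonneg v)
    exact abs_le.2 ⟨by linarith [sq_nonneg vy], by linarith [sq_nonneg vx]⟩
  have hx := hbound hX (hcross vx vy)
  have hy := hbound hY hdiff
  have ha := hbound ((abs_neg A).trans_le hA) (hcross vy g)
  have hvx := mul_nonneg ((abs_nonneg A).trans hA) (sq_nonneg vx)
  linarith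

lemma energy_integrand_le {x β δ L v vx l : ℝ} (hx : 0 ≤ x) (hxβ : x ≤ β) (hδ : 0 < δ)
    (hL : 1 ≤ L) :
    L ^ 2 * (v * (x * l - vx)) ≤
      (3 / 2 * β + 1 / (4 * δ)) * L ^ 4 * v ^ 2 + δ * vx ^ 2 +
        β / 2 * L ^ 2 * (l - L ^ 2 * v) ^ 2 := by
  have hL2 : 1 ≤ L ^ 2 := one_le_pow₀ hL
  have hsource : x * (2 * v * (l - L ^ 2 * v)) ≤ β * (L ^ 2 * v ^ 2 + (l - L ^ 2 * v) ^ 2) :=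
    calc x * (2 * v * (l - L ^ 2 * v))
        ≤ x * (v ^ 2 + (l - L ^ 2 * v) ^ 2) := by gcongr; exact two_mul_le_add_sq _ _
      _ ≤ β * (L ^ 2 * v ^ 2 + (l - L ^ 2 * v) ^ 2) := by
        gcongr
        exacts [hx.trans hxβ, le_mul_of_one_le_left (sq_nonneg v) hL2]
  have hmass : x * (L ^ 2 * v ^ 2) ≤ β * (L ^ 2 * v ^ 2) := by gcongr
  have habsorb : -(L ^ 2 * v * vx) ≤ 1 / (4 * δ) * L ^ 4 * v ^ 2 + δ * vx ^ 2 := by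
    have : 0 ≤ (L ^ 2 * v + 2 * δ * vx) ^ 2 / (4 * δ) := by positivity
    have hexpand : (L ^ 2 * v + 2 * δ * vx) ^ 2 / (4 * δ) =
        1 / (4 * δ) * L ^ 4 * v ^ 2 + δ * vx ^ 2 + L ^ 2 * v * vx := by
      field_simp
      ring
    linarith
  linear_combination L ^ 2 / 2 * hsource + L ^ 2 * hmass + habsorb

variable {β K L δ ε : ℝ} {a v : ℝ × ℝ → ℝ}

lemma setIntegral_halfDisc_fst_mul_sq_grad_le (hβ : 0 ≤ β)
    (hv : ∀ p ∈ halfDisc β, ContDiffAt ℝ 2 v p)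
    (hv₀ : ∀ p ∈ halfDisc β, p.1 ^ 2 + p.2 ^ 2 = β ^ 2 → v p = 0) (hδ : 0 < δ) (hL : 1 ≤ L) :
    L ^ 2 * ∫ p in halfDisc β, p.1 * (pdx v p ^ 2 + pdy v p ^ 2) ≤
      (3 / 2 * β + 1 / (4 * δ)) * L ^ 4 * (∫ p in halfDisc β, v p ^ 2) +
        δ * (∫ p in halfDisc β, pdx v p ^ 2) +
        β / 2 * L ^ 2 * ∫ p in halfDisc β, (lap v p - L ^ 2 * v p) ^ 2 := by
  have hcv : ContinuousOn v (halfDisc β) := fun p hp ↦ (hv p hp).continuousAt.continuousWithinAt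
  have hcx := continuousOn_pdx hv one_le_two
  have hcl := continuousOn_lap hv
  have hfst (p : ℝ × ℝ) : pdx Prod.fst p = 1 := deriv_id p.1
  have hsnd (p : ℝ × ℝ) : pdy Prod.fst p = 0 := deriv_const p.2 p.1
  rw [setIntegral_halfDisc_energy hβ (fun p _ ↦ contDiffAt_fst) (fun p _ h ↦ h) hv hv₀,
    ← integral_const_mul]
  refine setIntegral_le_of_le_add_add isCompact_halfDisc ?_ (by fun_prop) (by fun_prop)
    (by fun_prop) fun p hp ↦ ?_
  · simp only [hfst, hsnd, one_mul, zero_mul, sub_zero]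
    fun_prop
  · simpa only [hfst, hsnd, one_mul, zero_mul, sub_zero] using energy_integrand_le hp.2
      ((le_abs_self _).trans ((abs_fst_le_of_mem_halfDisc hp).trans_eq (abs_of_nonneg hβ))) hδ hL

lemma arcInt_mul_pdy_mul_nderiv_le_grad (hβ : 0 < β) (ha : ∀ p ∈ halfDisc β, ContDiffAt ℝ 1 a p)
    (haK : ∀ p ∈ halfDisc β, |a p| ≤ K * p.1) (haxK : ∀ p ∈ halfDisc β, |pdx a p| ≤ K * p.1)
    (hayK : ∀ p ∈ halfDisc β, |pdy a p| ≤ K * p.1) (hK : 0 ≤ K)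
    (hv : ∀ p ∈ halfDisc β, ContDiffAt ℝ 2 v p)
    (hv₀ : ∀ p ∈ halfDisc β, p.1 ^ 2 + p.2 ^ 2 = β ^ 2 → v p = 0) {k : ℝ} (hk : 0 ≤ k) :
    arcInt β (fun p n ↦ a p * pdy v p * nderiv v p n) ≤
      3 * K * (∫ p in halfDisc β, p.1 * (pdx v p ^ 2 + pdy v p ^ 2)) +
        K * β * k * (∫ p in halfDisc β, v p ^ 2) +
        K * β * ∫ p in halfDisc β, (lap v p - k * v p) ^ 2 := by
  have ha₀ : ∀ p ∈ halfDisc β, p.1 = 0 → a p = 0 := fun p hp h ↦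
    abs_nonpos_iff.1 ((haK p hp).trans_eq (by rw [h, mul_zero]))
  have hca : ContinuousOn a (halfDisc β) := fun p hp ↦ (ha p hp).continuousAt.continuousWithinAt
  have hcv : ContinuousOn v (halfDisc β) := fun p hp ↦ (hv p hp).continuousAt.continuousWithinAt
  have hcax := continuousOn_pdx ha le_rfl
  have hcay := continuousOn_pdy ha le_rfl
  have hcx := continuousOn_pdx hv one_le_two
  have hcy := continuousOn_pdy hv one_le_two
  have hcl := continuousOn_lap hv
  rw [arcInt_mul_pdy_mul_nderiv hβ ha ha₀ hv hv₀ k]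
  refine setIntegral_le_of_le_add_add isCompact_halfDisc (by fun_prop) (by fun_prop) (by fun_prop)
    (by fun_prop) fun p hp ↦ ?_
  have hle := rellich_integrand_le (v := v p) (vx := pdx v p) (vy := pdy v p)
    (g := lap v p - k * v p) (haK p hp) (haxK p hp) (hayK p hp) hk
  have hpβ : p.1 ≤ β :=
    (le_abs_self _).trans ((abs_fst_le_of_mem_halfDisc hp).trans_eq (abs_of_pos hβ))
  have hfst : K * p.1 * (k * v p ^ 2 + (lap v p - k * v p) ^ 2) ≤
      K * β * (k * v p ^ 2 + (lap v p - k * v p) ^ 2) := by gcongr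
  linarith

/-- The constant comes from `δ = ε / (3 * K)` in the weighted energy bound. -/
theorem sq_mul_arcInt_mul_pdy_mul_nderiv_le (hβ : 0 < β)
    (ha : ∀ p ∈ halfDisc β, ContDiffAt ℝ 1 a p)
    (haK : ∀ p ∈ halfDisc β, |a p| ≤ K * p.1) (haxK : ∀ p ∈ halfDisc β, |pdx a p| ≤ K * p.1)
    (hayK : ∀ p ∈ halfDisc β, |pdy a p| ≤ K * p.1) (hK : 0 < K)
    (hv : ∀ p ∈ halfDisc β, ContDiffAt ℝ 2 v p)
    (hv₀ : ∀ p ∈ halfDisc β, p.1 ^ 2 + p.2 ^ 2 = β ^ 2 → v p = 0) (hε : 0 < ε) (hL : 1 ≤ L) :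
    L ^ 2 * arcInt β (fun p n ↦ a p * pdy v p * nderiv v p n) ≤
      (11 / 2 * K * β + 9 * K ^ 2 / (4 * ε)) * L ^ 4 * (∫ p in halfDisc β, v p ^ 2) +
        ε * (∫ p in halfDisc β, pdx v p ^ 2) +
        (11 / 2 * K * β + 9 * K ^ 2 / (4 * ε)) * L ^ 2 *
          ∫ p in halfDisc β, (lap v p - L ^ 2 * v p) ^ 2 := by
  have hrellich := arcInt_mul_pdy_mul_nderiv_le_grad hβ ha haK haxK hayK hK.le hv hv₀ (sq_nonneg L)
  have henergy := setIntegral_halfDisc_fst_mul_sq_grad_le hβ.le hv hv₀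
    (show 0 < ε / (3 * K) by positivity) hL
  have hsource : 0 ≤ (3 * K * β + 9 * K ^ 2 / (4 * ε)) * L ^ 2 *
      ∫ p in halfDisc β, (lap v p - L ^ 2 * v p) ^ 2 := by positivity
  have hmass_coeff : 3 * K * (1 / (4 * (ε / (3 * K)))) = 9 * K ^ 2 / (4 * ε) := by
    field_simp
    norm_num
  have hgrad_coeff : 3 * K * (ε / (3 * K)) = ε := by field_simp
  linear_combination L ^ 2 * hrellich + 3 * K * henergy + hsource +
    L ^ 4 * (∫ p in halfDisc β, v p ^ 2) * hmass_coeff +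
    (∫ p in halfDisc β, pdx v p ^ 2) * hgrad_coeff

end Estimates

section Wings

/-- The chart of the wing on the side `s = ±1`: it carries `halfDisc β` onto that wing, and the
coordinate `p.1` is the distance `|x| - α` of the image point to the rectangle. -/
def wingChart (α s : ℝ) (p : ℝ × ℝ) : ℝ × ℝ := (s * (α + p.1), p.2)

variable {α β s : ℝ} {u h : ℝ × ℝ → ℝ}

lemma abs_fst_wingChart_sub (hα : 0 ≤ α) (hs : s * s = 1) {p : ℝ × ℝ} (hp : 0 ≤ p.1) :
    |(wingChart α s p).1| - α = p.1 := by
  have hs' : |s| = 1 := (abs_eq_abs.2 (mul_self_eq_one_iff.1 hs)).trans abs_one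
  rw [wingChart, abs_mul, hs', one_mul, abs_of_nonneg (add_nonneg hα hp), add_sub_cancel_left]

lemma contDiff_wingChart {n : WithTop ℕ∞} : ContDiff ℝ n (wingChart α s) :=
  (contDiff_const.mul (contDiff_const.add contDiff_fst)).prodMk contDiff_snd

lemma continuous_wingChart : Continuous (wingChart α s) :=
  (contDiff_wingChart (n := 0)).continuous

lemma wingChart_injective (hs : s ≠ 0) : Function.Injective (wingChart α s) := fun p q hpq ↦ by
  simpa [wingChart, hs, Prod.ext_iff] using hpq

lemma measurePreserving_wingChart (hs : s * s = 1) : MeasurePreserving (wingChart α s) := by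
  have hadd : MeasurePreserving (fun x : ℝ ↦ α + x) := measurePreserving_add_left volume α
  have hmul : MeasurePreserving (fun x : ℝ ↦ s * x) := by
    obtain rfl | rfl := mul_self_eq_one_iff.1 hs
    · exact (funext one_mul : (fun x : ℝ ↦ 1 * x) = id) ▸ MeasurePreserving.id volume
    · simpa using Measure.measurePreserving_neg (volume : Measure ℝ)
  exact (hmul.comp hadd).prod (MeasurePreserving.id (volume : Measure ℝ))

lemma setIntegral_wingChart_image (hs : s * s = 1) (h : ℝ × ℝ → ℝ) :
    ∫ p in wingChart α s '' halfDisc β, h p = ∫ p in halfDisc β, h (wingChart α s p) :=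
  (measurePreserving_wingChart hs).setIntegral_image_emb
    (continuous_wingChart.measurableEmbedding
      (wingChart_injective (left_ne_zero_of_mul_eq_one hs))) _ _

lemma wingChart_image_halfDisc (hs : s * s = 1) :
    wingChart α s '' halfDisc β = {q | (s * q.1 - α) ^ 2 + q.2 ^ 2 ≤ β ^ 2 ∧ α ≤ s * q.1} := by
  ext q
  constructor
  · rintro ⟨p, hp, rfl⟩
    have : s * (s * (α + p.1)) = α + p.1 := by rw [← mul_assoc, hs, one_mul]
    simpa only [mem_ofPred_eq, wingChart, this, add_sub_cancel_left, le_add_iff_nonneg_right,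
      halfDisc] using hp
  · rintro ⟨hle, hα⟩
    refine ⟨(s * q.1 - α, q.2), ⟨hle, sub_nonneg.2 hα⟩, Prod.ext ?_ rfl⟩
    rw [wingChart, add_sub_cancel, ← mul_assoc, hs, one_mul]

lemma wings_eq_union :
    Wings α β = wingChart α 1 '' halfDisc β ∪ wingChart α (-1) '' halfDisc β := by
  rw [wingChart_image_halfDisc (one_mul 1), wingChart_image_halfDisc (by norm_num), Wings]
  simp only [one_mul, neg_one_mul, ← neg_add', neg_sq, le_neg]

lemma wingChart_mem_wings (hs : s * s = 1) {p : ℝ × ℝ} (hp : p ∈ halfDisc β) :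
    wingChart α s p ∈ Wings α β := by
  rw [wings_eq_union]
  obtain rfl | rfl := mul_self_eq_one_iff.1 hs
  exacts [Or.inl (mem_image_of_mem _ hp), Or.inr (mem_image_of_mem _ hp)]

lemma isCompact_wings : IsCompact (Wings α β) := by
  rw [wings_eq_union]
  exact (isCompact_halfDisc.image continuous_wingChart).union
    (isCompact_halfDisc.image continuous_wingChart)

lemma setIntegral_wings (hα : 0 < α) (hh : ContinuousOn h (Wings α β)) :
    ∫ p in Wings α β, h p =
      (∫ p in halfDisc β, h (wingChart α 1 p)) + ∫ p in halfDisc β, h (wingChart α (-1) p) := by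
  have hint := hh.integrableOn_compact (μ := volume) isCompact_wings
  rw [wings_eq_union] at hint ⊢
  have hmeas : MeasurableSet (wingChart α (-1) '' halfDisc β) :=
    (isCompact_halfDisc.image continuous_wingChart).measurableSet
  have hdisj : Disjoint (wingChart α 1 '' halfDisc β) (wingChart α (-1) '' halfDisc β) := by
    rw [wingChart_image_halfDisc (one_mul 1), wingChart_image_halfDisc (by norm_num)]
    refine Set.disjoint_left.2 fun q hq hq' ↦ ?_
    linarith [hq.2, hq'.2]
  rw [setIntegral_union hdisj hmeas hint.left_of_union hint.right_of_union,
    setIntegral_wingChart_image (one_mul 1), setIntegral_wingChart_image (by norm_num)]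

lemma bdryIntW_eq_arcInt_add_arcInt (hβ : 0 ≤ β) {g : ℝ × ℝ → ℝ × ℝ → ℝ}
    (hg : ContinuousOn (Function.uncurry g) (Wings α β ×ˢ univ)) :
    bdryIntW α β g = arcInt β (fun p n ↦ g (wingChart α 1 p) (1 * n.1, n.2)) +
      arcInt β (fun p n ↦ g (wingChart α (-1) p) (-1 * n.1, n.2)) := by
  have hint {s : ℝ} (hs : s * s = 1) : IntervalIntegrable
      (fun θ ↦ g (wingChart α s (β * cos θ, β * sin θ)) (s * cos θ, sin θ)) volume
      (-(π / 2)) (π / 2) := by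
    refine ContinuousOn.intervalIntegrable_of_Icc (neg_le_self (by positivity)) ?_
    refine hg.comp (f := fun θ ↦ (wingChart α s (β * cos θ, β * sin θ), (s * cos θ, sin θ)))
      ?_ fun θ hθ ↦ ⟨wingChart_mem_wings hs (arc_mem_halfDisc hβ hθ), mem_univ _⟩
    unfold wingChart
    fun_prop
  rw [arcInt, arcInt, ← mul_add,
    ← intervalIntegral.integral_add (hint (one_mul 1)) (hint (by norm_num))]
  simp only [bdryIntW, wingChart, one_mul, neg_one_mul]

lemma pdx_comp_wingChart (α s : ℝ) (u : ℝ × ℝ → ℝ) :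
    pdx (u ∘ wingChart α s) = s • (pdx u ∘ wingChart α s) := by
  ext p
  have hadd := deriv_comp_const_add (f := fun t ↦ u (s * t, p.2)) α p.1
  have hmul := deriv_comp_mul_left s (fun t ↦ u (t, p.2)) (α + p.1)
  exact hadd.trans hmul

lemma pdy_comp_wingChart (α s : ℝ) (u : ℝ × ℝ → ℝ) :
    pdy (u ∘ wingChart α s) = pdy u ∘ wingChart α s := rfl

lemma lap_comp_wingChart (hs : s * s = 1) (u : ℝ × ℝ → ℝ) :
    lap (u ∘ wingChart α s) = lap u ∘ wingChart α s := by
  have hpdx : pdx (s • (pdx u ∘ wingChart α s)) = s • pdx (pdx u ∘ wingChart α s) :=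
    funext fun p ↦ deriv_const_mul_field s
  ext p
  simp only [lap, pdx_comp_wingChart, pdy_comp_wingChart, hpdx, ← mul_smul, hs, one_smul,
    Function.comp_apply]

lemma nderiv_comp_wingChart (α s : ℝ) (u : ℝ × ℝ → ℝ) (p n : ℝ × ℝ) :
    nderiv (u ∘ wingChart α s) p n = nderiv u (wingChart α s p) (s * n.1, n.2) := by
  simp only [nderiv, pdx_comp_wingChart, pdy_comp_wingChart, Pi.smul_apply, Function.comp_apply,
    smul_eq_mul]
  ring

lemma exists_sq_fst_mul_comp_snd_bound (β : ℝ) {χ : ℝ → ℝ} (hχ : ContDiff ℝ 1 χ) :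
    ∃ K > 0, ∀ p ∈ halfDisc β,
      |p.1 ^ 2 * χ p.2| ≤ K * p.1 ∧ |pdx (fun q ↦ q.1 ^ 2 * χ q.2) p| ≤ K * p.1 ∧
        |pdy (fun q ↦ q.1 ^ 2 * χ q.2) p| ≤ K * p.1 := by
  obtain ⟨M, hM⟩ := (isCompact_Icc (a := -|β|) (b := |β|)).exists_bound_of_continuousOn
    (hχ.continuous.prodMk (hχ.continuous_deriv le_rfl)).continuousOn
  have hM₀ : 0 ≤ M := (norm_nonneg _).trans (hM 0 (by simp))
  refine ⟨(2 + |β|) * M + 1, by positivity, fun p hp ↦ ?_⟩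
  have hpx : pdx (fun q ↦ q.1 ^ 2 * χ q.2) p = 2 * p.1 * χ p.2 := by
    exact ((hasDerivAt_pow 2 p.1).mul_const (χ p.2)).deriv.trans (by norm_num)
  have hpy : pdy (fun q ↦ q.1 ^ 2 * χ q.2) p = p.1 ^ 2 * deriv χ p.2 :=
    deriv_const_mul_field (p.1 ^ 2)
  have hp₁ : p.1 ≤ |β| := (le_abs_self _).trans (abs_fst_le_of_mem_halfDisc hp)
  obtain ⟨hχM, hχM'⟩ : |χ p.2| ≤ M ∧ |deriv χ p.2| ≤ M :=
    max_le_iff.1 (hM p.2 (abs_le.1 (abs_snd_le_of_mem_halfDisc hp)))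
  have hx := hp.2
  have hMx := mul_nonneg hM₀ hx
  have hsq {c : ℝ} (hc : |c| ≤ M) : |p.1 ^ 2 * c| ≤ ((2 + |β|) * M + 1) * p.1 :=
    calc |p.1 ^ 2 * c| = p.1 * p.1 * |c| := by rw [abs_mul, abs_of_nonneg (sq_nonneg _), sq]
      _ ≤ |β| * p.1 * M := by gcongr
      _ ≤ ((2 + |β|) * M + 1) * p.1 := by linarith
  refine ⟨hsq hχM, ?_, hpy ▸ hsq hχM'⟩
  calc |pdx (fun q ↦ q.1 ^ 2 * χ q.2) p| = 2 * p.1 * |χ p.2| := by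
        rw [hpx, abs_mul, abs_of_nonneg (by positivity)]
    _ ≤ 2 * p.1 * M := by gcongr
    _ ≤ ((2 + |β|) * M + 1) * p.1 := by linarith [mul_nonneg (abs_nonneg β) hMx]

theorem exists_sq_mul_arcInt_wingChart_le (hα : 0 ≤ α) (hβ : 0 < β) {χ : ℝ → ℝ}
    (hχ : ContDiff ℝ 1 χ) {ε : ℝ} (hε : 0 < ε) :
    ∃ C > 0, ∀ (s L : ℝ) (u : ℝ × ℝ → ℝ), s * s = 1 → 1 ≤ L →
      (∀ p ∈ Wings α β, ContDiffAt ℝ 2 u p) →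
      (∀ p ∈ Wings α β, (|p.1| - α) ^ 2 + p.2 ^ 2 = β ^ 2 → u p = 0) →
      L ^ 2 * arcInt β (fun p n ↦ (|(wingChart α s p).1| - α) ^ 2 * χ (wingChart α s p).2 *
          pdy u (wingChart α s p) * nderiv u (wingChart α s p) (s * n.1, n.2)) ≤
        C * L ^ 4 * (∫ p in halfDisc β, u (wingChart α s p) ^ 2) +
        ε * (∫ p in halfDisc β, pdx u (wingChart α s p) ^ 2) +
        C * L ^ 2 * ∫ p in halfDisc β,
          (lap u (wingChart α s p) - L ^ 2 * u (wingChart α s p)) ^ 2 := by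
  obtain ⟨K, hK, haK⟩ := exists_sq_fst_mul_comp_snd_bound β hχ
  refine ⟨11 / 2 * K * β + 9 * K ^ 2 / (4 * ε), by positivity, fun s L u hs hL hu hu₀ ↦ ?_⟩
  have ha : ContDiff ℝ 1 fun q : ℝ × ℝ ↦ q.1 ^ 2 * χ q.2 :=
    (contDiff_fst.pow 2).mul (hχ.comp contDiff_snd)
  have hv : ∀ p ∈ halfDisc β, ContDiffAt ℝ 2 (u ∘ wingChart α s) p := fun p hp ↦
    (hu _ (wingChart_mem_wings hs hp)).comp p contDiff_wingChart.contDiffAt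
  have hv₀ : ∀ p ∈ halfDisc β, p.1 ^ 2 + p.2 ^ 2 = β ^ 2 → (u ∘ wingChart α s) p = 0 :=
    fun p hp hpβ ↦ hu₀ _ (wingChart_mem_wings hs hp) <| by
      rwa [abs_fst_wingChart_sub hα hs hp.2]
  have hle := sq_mul_arcInt_mul_pdy_mul_nderiv_le hβ (fun p _ ↦ ha.contDiffAt)
    (fun p hp ↦ (haK p hp).1) (fun p hp ↦ (haK p hp).2.1) (fun p hp ↦ (haK p hp).2.2) hK hv hv₀
    hε hL
  have hsq (r : ℝ) : (s * r) ^ 2 = r ^ 2 := by rw [mul_pow, sq s, hs, one_mul]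
  simp only [pdx_comp_wingChart, lap_comp_wingChart hs, Pi.smul_apply, Function.comp_apply,
    smul_eq_mul, hsq] at hle
  refine Eq.trans_le (congrArg (L ^ 2 * ·) (arcInt_congr fun θ hθ ↦ ?_)) hle
  rw [abs_fst_wingChart_sub hα hs (arc_mem_halfDisc hβ.le (Ioo_subset_Icc_self hθ)).2]
  exact congrArg _ (nderiv_comp_wingChart α s u _ _).symm

end Wings

section Stadium

variable {α β : ℝ} {h : ℝ × ℝ → ℝ}

lemma isCompact_stadium : IsCompact (Stadium α β) :=
  (isCompact_Icc.prod isCompact_Icc).union isCompact_wings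

lemma setIntegral_sq_wings_le_stadium (hh : ContinuousOn h (Stadium α β)) :
    ∫ p in Wings α β, h p ^ 2 ≤ ∫ p in Stadium α β, h p ^ 2 :=
  setIntegral_mono_set ((hh.pow 2).integrableOn_compact isCompact_stadium)
    (ae_of_all _ fun p ↦ sq_nonneg (h p)) (ae_of_all _ subset_union_right)

lemma le_abs_fst_of_mem_wings {p : ℝ × ℝ} (hp : p ∈ Wings α β) : α ≤ |p.1| :=
  le_abs.2 (hp.imp And.right fun h ↦ le_neg.1 h.2)

lemma QMDatum.contDiffAt (d : QMDatum α β) {p : ℝ × ℝ} (hp : p ∈ Stadium α β) :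
    ContDiffAt ℝ 2 d.u p := by
  obtain ⟨V, hV, hSV, hu⟩ := d.smooth
  exact (hu.contDiffAt (hV.mem_nhds (hSV hp))).of_le (WithTop.coe_le_coe.2 (le_top (a := (2 : ℕ∞))))

lemma QMDatum.continuousOn_f (d : QMDatum α β) : ContinuousOn d.f (Stadium α β) := by
  have hcu : ContinuousOn d.u (Stadium α β) := fun p hp ↦
    (d.contDiffAt hp).continuousAt.continuousWithinAt
  exact ((continuousOn_lap fun p ↦ d.contDiffAt).sub (hcu.const_smul (d.lam ^ 2))).congr
    fun p hp ↦ (d.eqn p hp).symm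

end Stadium

theorem stmt16_general (α β : ℝ) (hα : 0 < α) (hβ : 0 < β) (χ : ℝ → ℝ) (hχ : ContDiff ℝ 1 χ) :
    ∀ ε > 0, ∃ C > 0, ∀ (u f : ℝ × ℝ → ℝ) (L : ℝ), 1 ≤ L →
      (∀ p ∈ Wings α β, ContDiffAt ℝ 2 u p) →
      (∀ p ∈ Wings α β, (|p.1| - α) ^ 2 + p.2 ^ 2 = β ^ 2 → u p = 0) →
      (∀ p ∈ Wings α β, lap u p - L ^ 2 * u p = f p) →
      L ^ 2 * bdryIntW α β (fun p n ↦ (|p.1| - α) ^ 2 * χ p.2 * pdy u p * nderiv u p n) ≤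
        C * L ^ 4 * (∫ p in Wings α β, u p ^ 2) + ε * (∫ p in Wings α β, pdx u p ^ 2) +
          C * L ^ 2 * ∫ p in Wings α β, f p ^ 2 := by
  intro ε hε
  obtain ⟨C, hC, hwing⟩ := exists_sq_mul_arcInt_wingChart_le hα.le hβ hχ hε
  refine ⟨C, hC, fun u f L hL hu hu₀ hf ↦ ?_⟩
  have hcu : ContinuousOn u (Wings α β) := fun p hp ↦ (hu p hp).continuousAt.continuousWithinAt
  have hcx := continuousOn_pdx hu one_le_two
  have hcy := continuousOn_pdy hu one_le_two
  have hcl := continuousOn_lap hu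
  have hcχ := hχ.continuous
  have hg : ContinuousOn (Function.uncurry fun p n ↦
      (|p.1| - α) ^ 2 * χ p.2 * pdy u p * nderiv u p n) (Wings α β ×ˢ univ) := by
    have hfst : MapsTo Prod.fst (Wings α β ×ˢ (univ : Set (ℝ × ℝ))) (Wings α β) := fun _ hq ↦ hq.1
    have hcx' := hcx.comp continuousOn_fst hfst
    have hcy' := hcy.comp continuousOn_fst hfst
    simp only [Function.uncurry_def, nderiv]
    fun_prop
  rw [bdryIntW_eq_arcInt_add_arcInt hβ.le hg,
    ← setIntegral_congr_fun isCompact_wings.measurableSet fun p hp ↦ congrArg (· ^ 2) (hf p hp),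
    setIntegral_wings hα (by fun_prop), setIntegral_wings hα (by fun_prop),
    setIntegral_wings hα (by fun_prop)]
  linear_combination hwing 1 L u (one_mul 1) hL hu hu₀ + hwing (-1) L u (by norm_num) hL hu hu₀

/-- Region II estimate, second version: for `χ` smooth, supported in
`{|y| > β/20}`, equal to `-1` for `y ≤ -β/10` and `1` for `y ≥ β/10`, and every `ε > 0`,
there are `C > 0` and `λ₀ > 0` such that every real Dirichlet quasimode datum with
`λ ≥ λ₀` satisfies
`λ² ∫_{∂S ∩ W} w² χ(y)(∂_y u)(∂_N u) dl ≤ C λ⁴ ‖u‖²_{L²(W)} + ε ∫_S (∂_x u)² + C λ² ‖f‖²`. -/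
theorem stmt16 (α β : ℝ) (hα : 0 < α) (hβ : 0 < β)
    (χ : ℝ → ℝ) (hχ : ContDiff ℝ (⊤ : ℕ∞) χ)
    (hχsupp : Function.support χ ⊆ {y : ℝ | β / 20 < |y|})
    (hχm : ∀ y, y ≤ -(β / 10) → χ y = -1)
    (hχp : ∀ y, β / 10 ≤ y → χ y = 1) :
    ∀ ε > 0, ∃ C > 0, ∃ lam₀ > 0, ∀ d : QMDatum α β, d.lam ≥ lam₀ →
      d.lam ^ 2 *
        bdryIntW α β (fun p n => (|p.1| - α) ^ 2 * χ p.2 * pdy d.u p * nderiv d.u p n) ≤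
        C * d.lam ^ 4 * (∫ p in Wings α β, (d.u p) ^ 2) +
        ε * (∫ p in Stadium α β, (pdx d.u p) ^ 2) +
        C * d.lam ^ 2 * (∫ p in Stadium α β, (d.f p) ^ 2) := by
  intro ε hε
  obtain ⟨C, hC, hle⟩ := stmt16_general α β hα hβ χ (hχ.of_le (by simp)) ε hε
  refine ⟨C, hC, 1, one_pos, fun d hd ↦ (hle d.u d.f d.lam hd (fun p hp ↦ d.contDiffAt (.inr hp))
    (fun p hp h ↦ d.dirichlet p (.inr ⟨h, le_abs_fst_of_mem_wings hp⟩))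
    fun p hp ↦ d.eqn p (.inr hp)).trans ?_⟩
  have hux := setIntegral_sq_wings_le_stadium (continuousOn_pdx (fun p ↦ d.contDiffAt) one_le_two)
  have hf := setIntegral_sq_wings_le_stadium d.continuousOn_f
  gcongr
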